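/- For Re(s) > 1, one has ζ(s)·L(s,χ₄) = (1/4) ∑_{n=1}^∞ r_n n^{-s}, where r_n = #{(a,b) ∈ ℤ² : a²+b² = n} and L(s,χ₄) = ∑_{k=0}^∞ (-1)^k/(2k+1)^s. -/

import Mathlib

open ZMod GaussianInt

/-- The set of Gaussian integers of norm `n`. -/
def gaussianNormSet (n : ℕ) : Set GaussianInt := {z | z.norm = n}

lemma gaussianInt_norm_eq (z : GaussianInt) : z.norm = z.re ^ 2 + z.im ^ 2 := by
  rw [Zsqrtd.norm_def]; ring

lemma finite_gaussianNormSet (n : ℕ) : (gaussianNormSet n).Finite := by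
  have hfin : ((fun z : GaussianInt ↦ (z.re, z.im)) ⁻¹'
      (Set.Icc (-(n : ℤ)) n ×ˢ Set.Icc (-(n : ℤ)) n)).Finite := by
    refine Set.Finite.preimage (fun a _ b _ h ↦ ?_)
      ((Set.finite_Icc _ _).prod (Set.finite_Icc _ _))
    simp only [Prod.mk.injEq] at h
    exact Zsqrtd.ext h.1 h.2
  refine hfin.subset fun z hz ↦ ?_
  have h : z.re ^ 2 + z.im ^ 2 = n := (gaussianInt_norm_eq z).symm.trans hz
  simp only [Set.mem_preimage, Set.mem_prod, Set.mem_Icc]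
  refine ⟨⟨?_, ?_⟩, ?_, ?_⟩ <;> nlinarith [sq_nonneg z.re, sq_nonneg z.im]

lemma natCard_sq_add_sq (n : ℕ) :
    Nat.card {p : ℤ × ℤ // p.1 ^ 2 + p.2 ^ 2 = (n : ℤ)} = (gaussianNormSet n).ncard := by
  rw [← Nat.card_coe_set_eq]
  exact Nat.card_congr
    { toFun := fun p ↦ ⟨⟨p.1.1, p.1.2⟩, (gaussianInt_norm_eq _).trans p.2⟩
      invFun := fun z ↦ ⟨(z.1.re, z.1.im), (gaussianInt_norm_eq _).symm.trans z.2⟩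
      left_inv := fun _ ↦ rfl
      right_inv := fun _ ↦ rfl }

lemma ncard_image_mul_gaussianNormSet {w : GaussianInt} (hw : w ≠ 0) (n : ℕ) :
    ((w * ·) '' gaussianNormSet n).ncard = (gaussianNormSet n).ncard :=
  Set.ncard_image_of_injective _ (mul_right_injective₀ hw)

lemma image_mul_gaussianNormSet {w : GaussianInt} {m : ℕ} (hm : m ≠ 0) (hw : w.norm = m) (n : ℕ) :
    (w * ·) '' gaussianNormSet n = {z ∈ gaussianNormSet (m * n) | w ∣ z} := by
  ext z
  constructor
  · rintro ⟨u, hu, rfl⟩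
    have hu : u.norm = n := hu
    refine ⟨?_, dvd_mul_right _ _⟩
    simp [gaussianNormSet, hw, hu]
  · rintro ⟨hz, u, rfl⟩
    refine ⟨u, ?_, rfl⟩
    have hz : (w * u).norm = ((m * n : ℕ) : ℤ) := hz
    rw [Zsqrtd.norm_mul, hw, Nat.cast_mul] at hz
    exact mul_left_cancel₀ (by exact_mod_cast hm) hz

lemma gaussianInt_prime_of_norm_prime {w : GaussianInt} {p : ℕ} (hp : p.Prime)
    (hw : w.norm = p) : Prime w := by
  refine Irreducible.prime ⟨fun h ↦ ?_, fun a b hab ↦ ?_⟩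
  · rw [← Zsqrtd.norm_eq_one_iff, hw, Int.natAbs_natCast] at h
    exact hp.one_lt.ne' h
  · have h : a.norm.natAbs * b.norm.natAbs = p := by
      rw [← Int.natAbs_mul, ← Zsqrtd.norm_mul, ← hab, hw, Int.natAbs_natCast]
    rw [← Zsqrtd.norm_eq_one_iff, ← Zsqrtd.norm_eq_one_iff]
    rcases Nat.prime_mul_iff.mp (h ▸ hp) with h' | h' <;> tauto

lemma exists_gaussianInt_norm_eq_prime {p : ℕ} (hp : p.Prime) (hp3 : p % 4 ≠ 3) :
    ∃ w : GaussianInt, w.norm = p := by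
  have := Fact.mk hp
  obtain ⟨a, b, h⟩ := Nat.Prime.sq_add_sq hp3
  refine ⟨⟨a, b⟩, ?_⟩
  rw [gaussianInt_norm_eq]
  dsimp only
  exact_mod_cast h

lemma dvd_or_star_dvd_of_mem_gaussianNormSet {w z : GaussianInt} {m n : ℕ} (hw : Prime w)
    (hwm : w ∣ (m : GaussianInt)) (hz : z ∈ gaussianNormSet (m * n)) : w ∣ z ∨ star w ∣ z := by
  have hz : z.norm = ((m * n : ℕ) : ℤ) := hz
  have h : w ∣ z * star z := by
    rw [← Zsqrtd.norm_eq_mul_conj, hz]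
    push_cast
    exact hwm.mul_right _
  refine (hw.dvd_or_dvd h).imp_right fun ⟨u, hu⟩ ↦ ⟨star u, ?_⟩
  rw [← star_star z, hu, star_mul']

lemma natCast_eq_mul_star_of_norm_eq {w : GaussianInt} {m : ℕ} (hw : w.norm = m) :
    (m : GaussianInt) = w * star w := by
  rw [← Zsqrtd.norm_eq_mul_conj, hw]; simp

lemma ncard_dvd_natCast_gaussianNormSet {p : ℕ} (hp : p ≠ 0) (n : ℕ) :
    {z ∈ gaussianNormSet (p * n) | (p : GaussianInt) ∣ z}.ncard =
      if p ∣ n then (gaussianNormSet (n / p)).ncard else 0 := by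
  have hnorm : ((p : GaussianInt)).norm = ((p * p : ℕ) : ℤ) := by
    rw [Zsqrtd.norm_natCast]; push_cast; rfl
  split_ifs with h
  · obtain ⟨m, rfl⟩ := h
    rw [Nat.mul_div_cancel_left _ (Nat.pos_of_ne_zero hp), ← mul_assoc,
      ← image_mul_gaussianNormSet (mul_ne_zero hp hp) hnorm,
      ncard_image_mul_gaussianNormSet (by exact_mod_cast hp)]
  · rw [Set.ncard_eq_zero ((finite_gaussianNormSet _).subset (Set.sep_subset _ _)),
      Set.eq_empty_iff_forall_notMem]
    rintro _ ⟨hz, u, rfl⟩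
    have hz : ((p : GaussianInt) * u).norm = ((p * n : ℕ) : ℤ) := hz
    rw [Zsqrtd.norm_mul, hnorm, Nat.cast_mul, Nat.cast_mul, mul_assoc] at hz
    have := mul_left_cancel₀ (by exact_mod_cast hp) hz
    exact h (Int.natCast_dvd_natCast.mp ⟨_, this.symm⟩)

lemma not_star_dvd_of_norm_eq_prime {w : GaussianInt} {p : ℕ} (hp : p.Prime) (hp2 : p ≠ 2)
    (hw : w.norm = p) : ¬ star w ∣ w := by
  intro h
  have hre : star w ∣ ((2 * w.re : ℤ) : GaussianInt) := by
    have : ((2 * w.re : ℤ) : GaussianInt) = w + star w := by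
      ext <;> simp [two_mul]
    exact this ▸ dvd_add h dvd_rfl
  obtain ⟨u, hu⟩ := hre
  have hnorm := congrArg Zsqrtd.norm hu
  rw [Zsqrtd.norm_mul, Zsqrtd.norm_conj, hw, Zsqrtd.norm_intCast] at hnorm
  have hpi : Prime (p : ℤ) := Nat.prime_iff_prime_int.mp hp
  have hdvd : (p : ℤ) ∣ 2 * w.re :=
    (hpi.dvd_or_dvd ⟨_, hnorm⟩).elim id id
  have h2 : ¬ (p : ℤ) ∣ 2 := fun h ↦
    hp2 ((Nat.prime_dvd_prime_iff_eq hp Nat.prime_two).mp (by exact_mod_cast h))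
  have hx : (p : ℤ) ∣ w.re := (hpi.dvd_or_dvd hdvd).resolve_left h2
  rw [gaussianInt_norm_eq] at hw
  have hy : (p : ℤ) ∣ w.im := hpi.dvd_of_dvd_pow (n := 2)
    ((dvd_add_right (dvd_pow hx two_ne_zero)).mp (hw ▸ dvd_rfl))
  obtain ⟨x, hx⟩ := hx
  obtain ⟨y, hy⟩ := hy
  have h1 : (p : ℤ) * (x ^ 2 + y ^ 2) = 1 := by
    refine mul_left_cancel₀ hpi.ne_zero ?_
    rw [hx, hy] at hw
    linear_combination hw
  exact hpi.not_dvd_one ⟨_, h1.symm⟩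

lemma ncard_gaussianNormSet_two_mul (n : ℕ) :
    (gaussianNormSet (2 * n)).ncard = (gaussianNormSet n).ncard := by
  let w : GaussianInt := ⟨1, 1⟩
  have hw : w.norm = (2 : ℕ) := by simp [w, Zsqrtd.norm_def]
  have hprime := gaussianInt_prime_of_norm_prime Nat.prime_two hw
  rw [← ncard_image_mul_gaussianNormSet hprime.ne_zero n,
    image_mul_gaussianNormSet two_ne_zero hw]
  congr 1
  refine (Set.sep_eq_self_iff_mem_true.mpr fun z hz ↦ ?_).symm
  refine (dvd_or_star_dvd_of_mem_gaussianNormSet hprime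
    ⟨_, natCast_eq_mul_star_of_norm_eq hw⟩ hz).elim id fun h ↦ dvd_trans ⟨⟨0, -1⟩, ?_⟩ h
  ext <;> simp [w]

lemma ncard_gaussianNormSet_prime_mul_of_three {p : ℕ} (hp : p.Prime) (hp3 : p % 4 = 3) (n : ℕ) :
    (gaussianNormSet (p * n)).ncard = if p ∣ n then (gaussianNormSet (n / p)).ncard else 0 := by
  have := Fact.mk hp
  rw [← ncard_dvd_natCast_gaussianNormSet hp.ne_zero]
  congr 1
  refine (Set.sep_eq_self_iff_mem_true.mpr fun z hz ↦ ?_).symm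
  simpa using dvd_or_star_dvd_of_mem_gaussianNormSet
    (prime_of_nat_prime_of_mod_four_eq_three p hp3) dvd_rfl hz

lemma ncard_gaussianNormSet_prime_mul_of_one {p : ℕ} (hp : p.Prime) (hp1 : p % 4 = 1) (n : ℕ) :
    (gaussianNormSet (p * n)).ncard + (if p ∣ n then (gaussianNormSet (n / p)).ncard else 0) =
      2 * (gaussianNormSet n).ncard := by
  obtain ⟨w, hw⟩ := exists_gaussianInt_norm_eq_prime hp (by omega)
  have hw' : (star w).norm = p := by rw [Zsqrtd.norm_conj, hw]
  have hprime := gaussianInt_prime_of_norm_prime hp hw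
  have hprime' := gaussianInt_prime_of_norm_prime hp hw'
  have hmul := natCast_eq_mul_star_of_norm_eq hw
  have hunion : {z ∈ gaussianNormSet (p * n) | w ∣ z} ∪
      {z ∈ gaussianNormSet (p * n) | star w ∣ z} = gaussianNormSet (p * n) := by
    rw [← Set.sep_or]
    exact Set.sep_eq_self_iff_mem_true.mpr fun z hz ↦
      dvd_or_star_dvd_of_mem_gaussianNormSet hprime ⟨_, hmul⟩ hz
  have hinter : {z ∈ gaussianNormSet (p * n) | w ∣ z} ∩
      {z ∈ gaussianNormSet (p * n) | star w ∣ z} =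
      {z ∈ gaussianNormSet (p * n) | (p : GaussianInt) ∣ z} := by
    rw [← Set.sep_and]
    ext z
    refine and_congr_right fun _ ↦ ⟨?_, fun h ↦ ?_⟩
    · rintro ⟨⟨u, rfl⟩, h⟩
      rw [hmul]
      exact mul_dvd_mul_left _ ((hprime'.dvd_or_dvd h).resolve_left
        (not_star_dvd_of_norm_eq_prime hp (by rintro rfl; omega) hw))
    · rw [hmul] at h
      exact ⟨(dvd_mul_right _ _).trans h, (dvd_mul_left _ _).trans h⟩
  have hcard := Set.ncard_union_add_ncard_inter {z ∈ gaussianNormSet (p * n) | w ∣ z}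
    {z ∈ gaussianNormSet (p * n) | star w ∣ z}
    ((finite_gaussianNormSet _).subset (Set.sep_subset _ _))
    ((finite_gaussianNormSet _).subset (Set.sep_subset _ _))
  rw [hunion, hinter, ncard_dvd_natCast_gaussianNormSet hp.ne_zero,
    ← image_mul_gaussianNormSet hp.ne_zero hw, ← image_mul_gaussianNormSet hp.ne_zero hw',
    ncard_image_mul_gaussianNormSet hprime.ne_zero,
    ncard_image_mul_gaussianNormSet hprime'.ne_zero] at hcard
  omega

/-- The Hecke relation for the number of Gaussian integers of given norm. -/
lemma ncard_gaussianNormSet_prime_mul {p : ℕ} (hp : p.Prime) (n : ℕ) :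
    ((gaussianNormSet (p * n)).ncard : ℤ) = (1 + χ₄ p) * (gaussianNormSet n).ncard
      - χ₄ p * (if p ∣ n then (gaussianNormSet (n / p)).ncard else 0 : ℕ) := by
  rcases hp.eq_two_or_odd with rfl | hodd
  · have h : χ₄ ((2 : ℕ) : ZMod 4) = 0 := by decide
    rw [ncard_gaussianNormSet_two_mul, h]; ring
  rcases Nat.odd_mod_four_iff.mp hodd with h1 | h3
  · have h := ncard_gaussianNormSet_prime_mul_of_one hp h1 n
    rw [χ₄_nat_one_mod_four h1]
    have h' := congrArg (Nat.cast : ℕ → ℤ) h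
    rw [Nat.cast_add, Nat.cast_mul] at h'
    linear_combination h'
  · rw [χ₄_nat_three_mod_four h3, ncard_gaussianNormSet_prime_mul_of_three hp h3]; ring

/-- The Hecke relation for the divisor sum of a completely multiplicative function. -/
lemma sum_divisors_prime_mul {R : Type*} [CommRing R] (f : ℕ →* R) {p : ℕ} (hp : p.Prime)
    {n : ℕ} (hn : n ≠ 0) :
    ∑ d ∈ (p * n).divisors, f d = (1 + f p) * ∑ d ∈ n.divisors, f d
      - f p * (if p ∣ n then ∑ d ∈ (n / p).divisors, f d else 0) := by
  have himage (m : ℕ) : ∑ d ∈ m.divisors.image (p * ·), f d = f p * ∑ d ∈ m.divisors, f d := by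
    rw [Finset.sum_image (mul_right_injective₀ hp.ne_zero).injOn, Finset.mul_sum]
    simp
  have hunion : n.divisors ∪ n.divisors.image (p * ·) = (p * n).divisors := by
    ext d
    simp only [Finset.mem_union, Finset.mem_image, Nat.mem_divisors]
    constructor
    · rintro (⟨h, -⟩ | ⟨e, ⟨h, -⟩, rfl⟩)
      · exact ⟨h.mul_left _, mul_ne_zero hp.ne_zero hn⟩
      · exact ⟨mul_dvd_mul_left _ h, mul_ne_zero hp.ne_zero hn⟩
    · rintro ⟨h, -⟩
      by_cases hpd : p ∣ d
      · obtain ⟨e, rfl⟩ := hpd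
        exact .inr ⟨e, ⟨Nat.dvd_of_mul_dvd_mul_left hp.pos h, hn⟩, rfl⟩
      · exact .inl ⟨((hp.coprime_iff_not_dvd.mpr hpd).symm).dvd_of_dvd_mul_left h, hn⟩
  have hinter : ∑ d ∈ n.divisors ∩ n.divisors.image (p * ·), f d =
      f p * (if p ∣ n then ∑ d ∈ (n / p).divisors, f d else 0) := by
    split_ifs with h
    · rw [← himage]
      obtain ⟨m, rfl⟩ := h
      rw [Nat.mul_div_cancel_left _ hp.pos]
      congr 1
      ext d
      simp only [Finset.mem_inter, Finset.mem_image, Nat.mem_divisors]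
      constructor
      · rintro ⟨⟨hd, -⟩, e, -, rfl⟩
        exact ⟨e, ⟨Nat.dvd_of_mul_dvd_mul_left hp.pos hd, right_ne_zero_of_mul hn⟩, rfl⟩
      · rintro ⟨e, ⟨he, -⟩, rfl⟩
        exact ⟨⟨mul_dvd_mul_left _ he, hn⟩, e, ⟨he.mul_left _, hn⟩, rfl⟩
    · rw [mul_zero]
      refine Finset.sum_eq_zero fun d hd ↦ ?_
      simp only [Finset.mem_inter, Finset.mem_image, Nat.mem_divisors] at hd
      obtain ⟨⟨hd, -⟩, e, -, rfl⟩ := hd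
      exact absurd ((dvd_mul_right _ _).trans hd) h
  have hsum := Finset.sum_union_inter (s₁ := n.divisors) (s₂ := n.divisors.image (p * ·)) (f := f)
  rw [hunion, hinter, himage] at hsum
  linear_combination hsum

lemma ncard_gaussianNormSet_one : (gaussianNormSet 1).ncard = 4 := by
  have h : gaussianNormSet 1 =
      (({⟨1, 0⟩, ⟨-1, 0⟩, ⟨0, 1⟩, ⟨0, -1⟩} : Finset GaussianInt) : Set GaussianInt) := by
    ext ⟨a, b⟩
    simp only [gaussianNormSet, Set.mem_ofPred_eq, gaussianInt_norm_eq, Finset.coe_insert,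
      Finset.coe_singleton, Set.mem_insert_iff, Set.mem_singleton_iff, Zsqrtd.ext_iff,
      Nat.cast_one]
    constructor
    · intro h
      have : -1 ≤ a := by nlinarith [sq_nonneg b]
      have : a ≤ 1 := by nlinarith [sq_nonneg b]
      have : -1 ≤ b := by nlinarith [sq_nonneg a]
      have : b ≤ 1 := by nlinarith [sq_nonneg a]
      interval_cases a <;> interval_cases b <;> simp_all
    · rintro (⟨rfl, rfl⟩ | ⟨rfl, rfl⟩ | ⟨rfl, rfl⟩ | ⟨rfl, rfl⟩) <;> norm_num
  rw [h, Set.ncard_coe_finset]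
  decide

/-- **Jacobi's two-square theorem**. -/
theorem ncard_gaussianNormSet_eq {n : ℕ} (hn : n ≠ 0) :
    ((gaussianNormSet n).ncard : ℤ) = 4 * ∑ d ∈ n.divisors, χ₄ d := by
  induction n using Nat.strong_induction_on with
  | _ n ih =>
    rcases eq_or_ne n 1 with rfl | hn1
    · simp [ncard_gaussianNormSet_one]
    obtain ⟨p, hp, m, rfl⟩ := Nat.exists_prime_and_dvd hn1
    have hm : m ≠ 0 := right_ne_zero_of_mul hn
    have hlt : m < p * m := lt_mul_left (Nat.pos_of_ne_zero hm) hp.one_lt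
    have hsum := sum_divisors_prime_mul
      ((χ₄ : ZMod 4 →* ℤ).comp (Nat.castRingHom (ZMod 4) : ℕ →* ZMod 4)) hp hm
    simp only [MonoidHom.comp_apply, MonoidHom.coe_coe, Nat.coe_castRingHom] at hsum
    rw [ncard_gaussianNormSet_prime_mul hp, hsum, ih m hlt hm]
    split_ifs with h
    · rw [ih (m / p) ((Nat.div_le_self _ _).trans_lt hlt)
        (Nat.div_pos (Nat.le_of_dvd (Nat.pos_of_ne_zero hm) h) hp.pos).ne']
      ring
    · push_cast; ring

/-- The character `χ₄` with complex values. -/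
noncomputable abbrev complexχ₄ : DirichletCharacter ℂ 4 := χ₄.ringHomComp (Int.castRingHom ℂ)

lemma LSeries_complexχ₄ {s : ℂ} :
    LSeries (fun n ↦ complexχ₄ n) s = ∑' k : ℕ, (-1 : ℂ) ^ k / ((2 * k + 1 : ℕ) : ℂ) ^ s := by
  have hinj : Function.Injective fun k : ℕ ↦ 2 * k + 1 := fun a b h ↦ by simpa using h
  rw [LSeries, ← hinj.tsum_eq]
  · refine tsum_congr fun k ↦ ?_
    rw [LSeries.term_of_ne_zero (by omega), MulChar.ringHomComp_apply,
      χ₄_eq_neg_one_pow (by omega), show (2 * k + 1) / 2 = k by omega]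
    simp
  · intro n hn
    by_contra hodd
    have heven : n % 2 = 0 := by
      by_contra h
      exact hodd ⟨n / 2, by dsimp only; omega⟩
    refine hn ?_
    rcases eq_or_ne n 0 with rfl | h0
    · simp
    rw [LSeries.term_of_ne_zero h0, MulChar.ringHomComp_apply, χ₄_nat_eq_if_mod_four,
      if_pos heven]
    simp

lemma one_convolution_complexχ₄ {n : ℕ} (hn : n ≠ 0) :
    LSeries.convolution 1 (fun n ↦ complexχ₄ n) n = (1 / 4) * ((gaussianNormSet n).ncard : ℂ) := by
  have h := congrArg (Int.cast : ℤ → ℂ) (ncard_gaussianNormSet_eq hn)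
  push_cast at h
  simp only [LSeries.convolution_def]
  rw [h, Nat.sum_divisorsAntidiagonal' fun a b ↦
    (1 : ℕ → ℂ) a * complexχ₄ b]
  simp

/-- For `Re s > 1`, `ζ(s) L(s,χ₄) = (1/4) ∑_{n≥1} r_n n^{-s}`, where
`r_n = #{(a,b) ∈ ℤ² : a² + b² = n}` and `L(s,χ₄) = ∑_{k≥0} (-1)^k/(2k+1)^s`. -/
theorem stmt14 (s : ℂ) (hs : 1 < s.re) :
    riemannZeta s * ∑' k : ℕ, (-1 : ℂ) ^ k / ((2 * k + 1 : ℕ) : ℂ) ^ s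
      = (1 / 4) * ∑' n : ℕ+,
          ((Nat.card {p : ℤ × ℤ // p.1 ^ 2 + p.2 ^ 2 = (n : ℤ)}) : ℂ) / (n : ℂ) ^ s := by
  rw [← LSeries_complexχ₄, ← LSeries_one_eq_riemannZeta hs,
    ← LSeries_convolution' (LSeriesSummable_one_iff.mpr hs)
      (DirichletCharacter.LSeriesSummable_of_one_lt_re complexχ₄ hs),
    LSeries, ← PNat.coe_injective.tsum_eq, ← tsum_mul_left]
  · refine tsum_congr fun n ↦ ?_
    rw [LSeries.term_of_ne_zero n.ne_zero, one_convolution_complexχ₄ n.ne_zero, mul_div_assoc,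
      ← natCard_sq_add_sq]
  · intro n hn
    have h0 : n ≠ 0 := by
      rintro rfl
      exact hn (LSeries.term_zero ..)
    exact ⟨⟨n, Nat.pos_of_ne_zero h0⟩, rfl⟩
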